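/- arXiv:1910.08064 — 3 statements merged into one kernel-verified Lean document; each statement's English description precedes it below -/
import Mathlib

section
/- Let N ≥ 1 and let λ be a partition with at most N parts, padded with zeros to length N. Then for any ℓ ≥ λ₁, the following identity of polynomials in ℤ[x₁, …, x_N] holds: det( (x_i^{λ_j + N − j})_{1≤i,j≤N} ) = det( (x_i^{N−j})_{1≤i,j≤N} ) · det( (e_{λ'_i − i + j}(x₁, …, x_N))_{1≤i,j≤ℓ} ), i.e. the Schur polynomial s_λ equals the dual Jacobi–Trudi determinant in elementary symmetric polynomials. -/
open MvPolynomial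

/-- The conjugate partition, with 1-based index: `conjugatePart l i = #{ j : l_j ≥ i }`,
where `l : ℕ → ℕ` lists the parts 0-based (`l 0 = λ₁`). -/
noncomputable def conjugatePart (l : ℕ → ℕ) (i : ℕ) : ℕ :=
  Set.ncard {j : ℕ | i ≤ l j}

/-- The elementary symmetric polynomial in `N` variables with an integer index:
`e_k` for `k ≥ 0` (which is `0` for `k > N`), and `0` for `k < 0`. -/
noncomputable def eInt (N : ℕ) (k : ℤ) : MvPolynomial (Fin N) ℤ :=
  if 0 ≤ k then MvPolynomial.esymm (Fin N) ℤ k.toNat else 0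

/-!
Write `P` for the `N × (N + ℓ)` matrix of powers `(-xᵢ)ᵏ` and `C` for the `(N + ℓ) × ℓ` matrix whose
`j`-th column lists the coefficients of `Q tʲ`, where `Q = ∏ᵢ (t + xᵢ)`. Since `Q` vanishes at every
`-xᵢ`, we have `P * C = 0`, and so the maximal minors of `P` are proportional, up to sign, to the
complementary minors of `C`. The vertical and horizontal steps of the boundary path of `λ` split
`{0, …, N + ℓ - 1}` into the exponents `λⱼ + N - j` and the rows `N + i - λ'ᵢ₊₁` (`i ≥ 0`), where
the entries of `C` are the `e_{λ'ᵢ₊₁ - i + j}`; comparing with the split `{0, …, N - 1}`,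
`{N, …, N + ℓ - 1}`, whose minor of `C` is unitriangular, gives the identity. The sign of the
boundary split is `(-1) ^ |λ|`, which is exactly what replacing `x` by `-x` costs.
-/

section Determinants

variable {R : Type*} [CommRing R]

lemma det_submatrix_mul_det_submatrix_of_mul_eq_zero {m n ι : Type*} [Fintype m] [Fintype n]
    [Fintype ι] [DecidableEq m] [DecidableEq n] {P : Matrix m ι R} {C : Matrix ι n R}
    (hPC : P * C = 0) (e f : m ⊕ n ≃ ι) :
    (P.submatrix id (e ∘ Sum.inl)).det * (C.submatrix (f ∘ Sum.inr) id).det =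
      Equiv.Perm.sign (e.trans f.symm) *
        ((P.submatrix id (f ∘ Sum.inl)).det * (C.submatrix (e ∘ Sum.inr) id).det) := by
  classical
  -- Complete `P` and `C` by standard vectors to square matrices whose product is block triangular.
  let P' : Matrix (m ⊕ n) ι R := .fromRows P (.submatrix 1 (f ∘ Sum.inr) id)
  let C' : Matrix ι (m ⊕ n) R := .fromCols (.submatrix 1 id (e ∘ Sum.inl)) C
  have hmul : P' * C' = .fromBlocks (P.submatrix id (e ∘ Sum.inl)) 0
      (.submatrix 1 (f ∘ Sum.inr) (e ∘ Sum.inl)) (C.submatrix (f ∘ Sum.inr) id) := by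
    rw [Matrix.fromRows_mul_fromCols, hPC]
    congr 1 <;> ext <;> simp [Matrix.mul_apply, Matrix.one_apply]
  have hP' : P'.submatrix id f = .fromBlocks (P.submatrix id (f ∘ Sum.inl))
      (P.submatrix id (f ∘ Sum.inr)) 0 1 := by
    ext (i | i) (j | j) <;> simp [P', Matrix.one_apply]
  have hC' : C'.submatrix e id = .fromBlocks 1 (C.submatrix (e ∘ Sum.inl) id) 0
      (C.submatrix (e ∘ Sum.inr) id) := by
    ext (i | i) (j | j) <;> simp [C', Matrix.one_apply]
  have hperm : C'.submatrix f id = (C'.submatrix e id).submatrix (e.trans f.symm).symm id := by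
    ext i j
    simp
  calc (P.submatrix id (e ∘ Sum.inl)).det * (C.submatrix (f ∘ Sum.inr) id).det
      = (P' * C').det := by rw [hmul, Matrix.det_fromBlocks_zero₁₂]
    _ = (P'.submatrix id f).det * (C'.submatrix f id).det := by
      rw [← Matrix.det_mul, Matrix.submatrix_mul_equiv, Matrix.submatrix_id_id]
    _ = _ := by
      rw [hperm, Matrix.det_permute, Equiv.Perm.sign_symm, hP', hC', Matrix.det_fromBlocks_zero₂₁,
        Matrix.det_fromBlocks_zero₂₁, Matrix.det_one, Matrix.det_one, mul_one, one_mul,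
        mul_left_comm]

lemma sum_pow_mul_coeff_mul_X_pow_eq_zero {N ℓ : ℕ} {Q : Polynomial R} (hQ : Q.natDegree ≤ N)
    {y : R} (hy : Q.eval y = 0) (j : Fin ℓ) :
    ∑ k : Fin (N + ℓ), y ^ (k : ℕ) * (Q * Polynomial.X ^ (j : ℕ)).coeff k = 0 := by
  have hlt : (Q * Polynomial.X ^ (j : ℕ)).natDegree < N + ℓ := by
    have := Polynomial.natDegree_mul_le_of_le hQ (Polynomial.natDegree_X_pow_le (R := R) (j : ℕ))
    omega
  have heval := Polynomial.eval_eq_sum_range' hlt y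
  rw [Polynomial.eval_mul, hy, zero_mul, Finset.sum_range] at heval
  simpa only [mul_comm] using heval.symm

lemma det_coeff_mul_X_pow_eq_one {N : ℕ} {Q : Polynomial R} (hQ : Q.IsMonicOfDegree N) (ℓ : ℕ) :
    (Matrix.of fun i j : Fin ℓ => (Q * Polynomial.X ^ (j : ℕ)).coeff (N + i)).det = 1 := by
  rw [Matrix.det_of_isUpperTriangular]
  · have hcoeff : Q.coeff N = 1 := by simpa only [hQ.natDegree_eq] using hQ.monic.coeff_natDegree
    simp [Polynomial.coeff_mul_X_pow, hcoeff]
  · intro i j (hij : j < i)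
    rw [Matrix.of_apply, Polynomial.coeff_mul_X_pow', if_pos (by omega)]
    exact Polynomial.coeff_eq_zero_of_natDegree_lt (by have := hQ.natDegree_eq; omega)

lemma det_pow_eq_sign_mul_det_coeff {N ℓ : ℕ} {Q : Polynomial R} (hQ : Q.IsMonicOfDegree N)
    {y : Fin N → R} (hy : ∀ i, Q.eval (y i) = 0) (e : Fin N ⊕ Fin ℓ ≃ Fin (N + ℓ)) :
    (Matrix.of fun i j : Fin N => y i ^ (e (Sum.inl j) : ℕ)).det =
      Equiv.Perm.sign (e.trans finSumFinEquiv.symm) * ((Matrix.vandermonde y).det *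
        (Matrix.of fun i j : Fin ℓ =>
          (Q * Polynomial.X ^ (j : ℕ)).coeff (e (Sum.inr i))).det) := by
  let P : Matrix (Fin N) (Fin (N + ℓ)) R := .of fun i k => y i ^ (k : ℕ)
  let C : Matrix (Fin (N + ℓ)) (Fin ℓ) R := .of fun k j => (Q * Polynomial.X ^ (j : ℕ)).coeff k
  have hPC : P * C = 0 := by
    ext i j
    exact sum_pow_mul_coeff_mul_X_pow_eq_zero hQ.natDegree_eq.le (hy i) j
  have hC : (C.submatrix (finSumFinEquiv ∘ Sum.inr) id).det = 1 :=
    det_coeff_mul_X_pow_eq_one hQ ℓ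
  have hminor := det_submatrix_mul_det_submatrix_of_mul_eq_zero hPC e finSumFinEquiv
  rwa [hC, mul_one] at hminor

lemma det_neg_pow {n : Type*} [Fintype n] [DecidableEq n] (x : n → R) (f : n → ℕ) :
    (Matrix.of fun i j => (-x i) ^ f j).det =
      (-1) ^ (∑ j, f j) * (Matrix.of fun i j => x i ^ f j).det := by
  rw [← Finset.prod_pow_eq_pow_sum, ← Matrix.det_mul_row]
  simp only [Matrix.of_apply, ← neg_pow]

lemma det_of_comp_rev {N : ℕ} (M : Fin N → Fin N → R) :
    (Matrix.of fun i j => M i j.rev).det =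
      Equiv.Perm.sign (Fin.revPerm (n := N)) * (Matrix.of M).det :=
  Matrix.det_permute' Fin.revPerm (Matrix.of M)

end Determinants

section ElementarySymmetric

variable {R : Type*} [CommRing R] {N : ℕ}

lemma isMonicOfDegree_prod_X_add_C [Nontrivial R] (x : Fin N → R) :
    (∏ k, (Polynomial.X + Polynomial.C (x k))).IsMonicOfDegree N := by
  refine ⟨?_, Polynomial.monic_prod_of_monic _ _ fun k _ => Polynomial.monic_X_add_C _⟩
  rw [Polynomial.natDegree_prod_of_monic _ _ fun k _ => Polynomial.monic_X_add_C _]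
  simp

lemma eInt_of_lt {k : ℤ} (hk : N < k) : eInt N k = 0 := by
  rw [eInt, if_pos (by omega), MvPolynomial.esymm, Finset.powersetCard_eq_empty.mpr,
    Finset.sum_empty]
  rw [Finset.card_univ, Fintype.card_fin]
  omega

lemma coeff_prod_X_add_C_eq_aeval_eInt (x : Fin N → R) (m : ℕ) :
    (∏ k, (Polynomial.X + Polynomial.C (x k))).coeff m = aeval x (eInt N (N - m)) := by
  nontriviality R
  rcases le_or_gt m N with hm | hm
  · rw [Finset.prod_X_add_C_coeff _ _ (by simpa using hm), eInt, if_pos (by omega)]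
    simp [MvPolynomial.esymm, ← Nat.cast_sub hm]
  · rw [eInt, if_neg (by omega), map_zero]
    exact Polynomial.coeff_eq_zero_of_natDegree_lt
      ((isMonicOfDegree_prod_X_add_C x).natDegree_eq.trans_lt hm)

lemma coeff_prod_X_add_C_mul_X_pow (x : Fin N → R) (j m : ℕ) :
    ((∏ k, (Polynomial.X + Polynomial.C (x k))) * Polynomial.X ^ j).coeff m =
      aeval x (eInt N (N + j - m)) := by
  rw [Polynomial.coeff_mul_X_pow']
  split_ifs with hjm
  · rw [coeff_prod_X_add_C_eq_aeval_eInt, Nat.cast_sub hjm, sub_sub_eq_add_sub]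
  · rw [eInt_of_lt (by omega), map_zero]

end ElementarySymmetric

lemma sign_eq_prod_prod_inversions {n : ℕ} (σ : Equiv.Perm (Fin n)) :
    Equiv.Perm.sign σ = ∏ j, ∏ i, if i < j ∧ σ j < σ i then -1 else 1 := by
  rw [Equiv.Perm.sign_eq_prod_prod_Iio]
  refine Finset.prod_congr rfl fun j _ => ?_
  rw [← Finset.filter_gt_eq_Iio, Finset.prod_filter]
  refine Finset.prod_congr rfl fun i _ => ?_
  have hne : i ≠ j → σ i ≠ σ j := σ.injective.ne
  grind

lemma sign_trans_finSumFinEquiv_symm {m n : ℕ} (e : Fin m ⊕ Fin n ≃ Fin (m + n))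
    (hl : StrictMono (e ∘ Sum.inl)) (hr : StrictMono (e ∘ Sum.inr)) :
    Equiv.Perm.sign (e.trans finSumFinEquiv.symm) =
      ∏ j, ∏ i, if e (Sum.inr i) < e (Sum.inl j) then -1 else 1 := by
  have hconj : e.trans finSumFinEquiv.symm =
      (finSumFinEquiv.trans (finSumFinEquiv.symm.trans e)).trans finSumFinEquiv.symm := by
    ext
    simp
  have hll (j j' : Fin m) :
      ¬(Fin.castAdd n j < Fin.castAdd n j' ∧ e (Sum.inl j') < e (Sum.inl j)) :=
    fun h => (hl h.1).not_gt h.2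
  have hrr (i i' : Fin n) :
      ¬(Fin.natAdd m i < Fin.natAdd m i' ∧ e (Sum.inr i') < e (Sum.inr i)) :=
    fun h => (hr ((Fin.natAdd_lt_natAdd_iff m).1 h.1)).not_gt h.2
  have hlr (j : Fin m) (i : Fin n) : Fin.castAdd n j < Fin.natAdd m i :=
    j.isLt.trans_le (Nat.le_add_right m i)
  rw [hconj, Equiv.Perm.sign_trans_trans_symm, sign_eq_prod_prod_inversions]
  simp only [← finSumFinEquiv.prod_comp, Fintype.prod_sum_type, Equiv.trans_apply,
    Equiv.symm_apply_apply, finSumFinEquiv_apply_left, finSumFinEquiv_apply_right, hll, hrr, hlr,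
    (hlr _ _).not_gt, true_and, false_and, if_false, Finset.prod_const_one, one_mul, mul_one]
  exact Finset.prod_comm

section BoundaryPath

lemma lt_conjugatePart_iff {l : ℕ → ℕ} (hl : Antitone l) {N : ℕ} (hN : l N = 0) (i j : ℕ) :
    j < conjugatePart l (i + 1) ↔ i < l j := by
  have hex : ∃ m, l m ≤ i := ⟨N, by omega⟩
  have lt_find_iff (k : ℕ) : k < Nat.find hex ↔ i < l k := by
    refine ⟨fun h => not_le.mp (Nat.find_min hex h), fun h => ?_⟩
    by_contra! hk
    exact (h.trans_le (hl hk)).not_ge (Nat.find_spec hex)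
  have hset : {k : ℕ | i + 1 ≤ l k} = Set.Iio (Nat.find hex) :=
    Set.ext fun k => (lt_find_iff k).symm
  rw [conjugatePart, hset, Set.ncard_Iio_nat, lt_find_iff]

lemma conjugatePart_succ_le {l : ℕ → ℕ} (hl : Antitone l) {N : ℕ} (hN : l N = 0) (i : ℕ) :
    conjugatePart l (i + 1) ≤ N := by
  by_contra! h
  have := (lt_conjugatePart_iff hl hN i N).1 h
  omega

lemma antitone_conjugatePart_succ {l : ℕ → ℕ} (hl : Antitone l) {N : ℕ} (hN : l N = 0) :
    Antitone fun i => conjugatePart l (i + 1) := by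
  intro i i' hii'
  refine le_of_forall_lt fun j hj => ?_
  rw [lt_conjugatePart_iff hl hN] at hj ⊢
  exact hii'.trans_lt hj

/-- The boundary path of the Young diagram of `lam` (rows listed from the top) in an `N × ℓ` box has
`N + ℓ` unit steps, numbered from `0` at the bottom left corner of the box. `boundaryPos lam N ℓ`
gives the number of a step: `Sum.inl j` is the vertical step that ends row `N - 1 - j`, and
`Sum.inr i` is the horizontal step at the bottom of column `i` (rows and columns counted from `0`).
The subtraction does not truncate for a partition with at most `N` parts. -/
noncomputable def boundaryPos (lam : ℕ → ℕ) (N ℓ : ℕ) : Fin N ⊕ Fin ℓ → ℕ :=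
  Sum.elim (fun j => lam j.rev + j) (fun i => N + i - conjugatePart lam (i + 1))

lemma boundaryPos_inl (lam : ℕ → ℕ) {N ℓ : ℕ} (j : Fin N) :
    boundaryPos lam N ℓ (Sum.inl j) = lam j.rev + j :=
  rfl

lemma boundaryPos_inr (lam : ℕ → ℕ) {N ℓ : ℕ} (i : Fin ℓ) :
    boundaryPos lam N ℓ (Sum.inr i) = N + i - conjugatePart lam (i + 1) :=
  rfl

variable {lam : ℕ → ℕ} {N ℓ : ℕ}

lemma strictMono_boundaryPos_inl (hanti : Antitone lam) :
    StrictMono fun j : Fin N => boundaryPos lam N ℓ (Sum.inl j) := fun _ _ hj =>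
  add_lt_add_of_le_of_lt (hanti (Fin.rev_le_rev.2 hj.le)) hj

lemma strictMono_boundaryPos_inr (hanti : Antitone lam) (hlen : lam N = 0) :
    StrictMono fun i : Fin ℓ => boundaryPos lam N ℓ (Sum.inr i) := by
  intro i i' (hi : (i : ℕ) < i')
  have hle := conjugatePart_succ_le hanti hlen i
  have hconj := antitone_conjugatePart_succ hanti hlen hi.le
  simp only [boundaryPos_inr] at hconj ⊢
  omega

lemma boundaryPos_inr_lt_inl_iff (hanti : Antitone lam) (hlen : lam N = 0) (j : Fin N)
    (i : Fin ℓ) :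
    boundaryPos lam N ℓ (Sum.inr i) < boundaryPos lam N ℓ (Sum.inl j) ↔ (i : ℕ) < lam j.rev := by
  have hconj := lt_conjugatePart_iff hanti hlen i j.rev
  have hle := conjugatePart_succ_le hanti hlen i
  simp only [boundaryPos_inl, boundaryPos_inr, Fin.val_rev] at hconj ⊢
  omega

lemma boundaryPos_inl_ne_inr (hanti : Antitone lam) (hlen : lam N = 0) (j : Fin N) (i : Fin ℓ) :
    boundaryPos lam N ℓ (Sum.inl j) ≠ boundaryPos lam N ℓ (Sum.inr i) := by
  have hconj := lt_conjugatePart_iff hanti hlen i j.rev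
  have hle := conjugatePart_succ_le hanti hlen i
  simp only [boundaryPos_inl, boundaryPos_inr, Fin.val_rev] at hconj ⊢
  omega

lemma boundaryPos_injective (hanti : Antitone lam) (hlen : lam N = 0) :
    Function.Injective (boundaryPos lam N ℓ) :=
  (strictMono_boundaryPos_inl (ℓ := ℓ) hanti).injective.sumElim
    (strictMono_boundaryPos_inr hanti hlen).injective (boundaryPos_inl_ne_inr hanti hlen)

lemma boundaryPos_lt (hanti : Antitone lam) (hℓ : lam 0 ≤ ℓ) (s : Fin N ⊕ Fin ℓ) :
    boundaryPos lam N ℓ s < N + ℓ := by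
  rcases s with j | i
  · have := hanti (Nat.zero_le j.rev)
    simp only [boundaryPos_inl]
    omega
  · simp only [boundaryPos_inr]
    omega

/-- The bijection from the vertical and horizontal steps of the boundary path of `lam` to their
positions along the path, see `boundaryPos`. -/
noncomputable def boundaryEquiv (hanti : Antitone lam) (hlen : lam N = 0) (hℓ : lam 0 ≤ ℓ) :
    Fin N ⊕ Fin ℓ ≃ Fin (N + ℓ) :=
  Equiv.ofBijective (fun s => ⟨boundaryPos lam N ℓ s, boundaryPos_lt hanti hℓ s⟩) <|
    (Fintype.bijective_iff_injective_and_card _).2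
      ⟨fun _ _ h => boundaryPos_injective hanti hlen (Fin.mk.inj h), by simp⟩

lemma boundaryEquiv_apply_val (hanti : Antitone lam) (hlen : lam N = 0) (hℓ : lam 0 ≤ ℓ)
    (s : Fin N ⊕ Fin ℓ) : (boundaryEquiv hanti hlen hℓ s : ℕ) = boundaryPos lam N ℓ s :=
  rfl

lemma sign_boundaryEquiv (hanti : Antitone lam) (hlen : lam N = 0) (hℓ : lam 0 ≤ ℓ) :
    Equiv.Perm.sign ((boundaryEquiv hanti hlen hℓ).trans finSumFinEquiv.symm) =
      (-1) ^ ∑ j : Fin N, lam j.rev := by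
  have hlt (j : Fin N) (i : Fin ℓ) : boundaryEquiv hanti hlen hℓ (Sum.inr i) <
      boundaryEquiv hanti hlen hℓ (Sum.inl j) ↔ (i : ℕ) < lam j.rev :=
    boundaryPos_inr_lt_inl_iff hanti hlen j i
  have hle (j : ℕ) : lam j ≤ ℓ := (hanti (Nat.zero_le j)).trans hℓ
  rw [sign_trans_finSumFinEquiv_symm _ (strictMono_boundaryPos_inl (ℓ := ℓ) hanti)
    (strictMono_boundaryPos_inr hanti hlen), ← Finset.prod_pow_eq_pow_sum]
  simp [hlt, Finset.prod_ite, Fin.card_filter_val_lt, hle]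

end BoundaryPath

section DualJacobiTrudi

variable {R : Type*} [CommRing R] {N ℓ : ℕ} {lam : ℕ → ℕ}

lemma coeff_boundaryPos_inr (x : Fin N → R) (hanti : Antitone lam) (hlen : lam N = 0)
    (i j : Fin ℓ) :
    ((∏ k, (Polynomial.X + Polynomial.C (x k))) * Polynomial.X ^ (j : ℕ)).coeff
        (boundaryPos lam N ℓ (Sum.inr i)) =
      aeval x (eInt N ((conjugatePart lam (i + 1) : ℤ) - (i : ℕ) + (j : ℕ))) := by
  have hle := conjugatePart_succ_le hanti hlen i
  rw [coeff_prod_X_add_C_mul_X_pow]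
  simp only [boundaryPos_inr]
  congr 2
  omega

lemma det_pow_rev_add_eq (x : Fin N → R) (hanti : Antitone lam) (hlen : lam N = 0)
    (hℓ : lam 0 ≤ ℓ) :
    (Matrix.of fun i j : Fin N => x i ^ (lam j.rev + j)).det =
      (Matrix.of fun i j : Fin N => x i ^ (j : ℕ)).det *
      (Matrix.of fun i j : Fin ℓ =>
        aeval x (eInt N ((conjugatePart lam (i + 1) : ℤ) - (i : ℕ) + (j : ℕ)))).det := by
  nontriviality R
  have hroot (i : Fin N) : (∏ k, (Polynomial.X + Polynomial.C (x k))).eval (-x i) = 0 := by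
    rw [Polynomial.eval_prod]
    exact Finset.prod_eq_zero (Finset.mem_univ i) (by simp)
  have hminor := det_pow_eq_sign_mul_det_coeff (isMonicOfDegree_prod_X_add_C x) hroot
    (boundaryEquiv hanti hlen hℓ)
  rw [sign_boundaryEquiv] at hminor
  simp only [boundaryEquiv_apply_val, boundaryPos_inl, coeff_boundaryPos_inr x hanti hlen,
    Matrix.vandermonde] at hminor
  rw [det_neg_pow, det_neg_pow, Finset.sum_add_distrib, pow_add] at hminor
  push_cast at hminor
  simp only [mul_assoc] at hminor
  exact (isUnit_neg_one.pow _).mul_left_cancel ((isUnit_neg_one.pow _).mul_left_cancel hminor)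

end DualJacobiTrudi

theorem statement2_general {R : Type*} [CommRing R] {N ℓ : ℕ} (x : Fin N → R) {lam : ℕ → ℕ}
    (hanti : Antitone lam) (hlen : lam N = 0) (hℓ : lam 0 ≤ ℓ) :
    (Matrix.of fun i j : Fin N => x i ^ (lam j + (N - 1 - (j : ℕ)))).det =
      (Matrix.of fun i j : Fin N => x i ^ (N - 1 - (j : ℕ))).det *
      (Matrix.of fun i j : Fin ℓ =>
        aeval x (eInt N ((conjugatePart lam (i + 1) : ℤ) - (i : ℕ) + (j : ℕ)))).det := by
  have val_rev (j : Fin N) : N - 1 - (j : ℕ) = j.rev := by rw [Fin.val_rev]; omega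
  have hrev := det_of_comp_rev fun i j : Fin N => x i ^ (lam j.rev + j)
  simp only [Fin.rev_rev] at hrev
  simp only [val_rev]
  rw [hrev, det_of_comp_rev fun i j : Fin N => x i ^ (j : ℕ), det_pow_rev_add_eq x hanti hlen hℓ,
    mul_assoc]

/-- For `N ≥ 1`, a partition `λ` with at most `N` parts (padded with zeros
to length `N`, written 0-based), and any `ℓ ≥ λ₁`:
`det((x_i^{λ_j + N - j})_{1≤i,j≤N}) = det((x_i^{N-j})_{1≤i,j≤N}) · det((e_{λ'_i - i + j})_{1≤i,j≤ℓ})`,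
i.e. the Schur polynomial `s_λ` equals the dual Jacobi–Trudi determinant in elementary
symmetric polynomials. -/
theorem statement2 (N : ℕ) (hN : 1 ≤ N) (lam : ℕ → ℕ)
    (hlam_anti : Antitone lam) (hlam_len : ∀ j, N ≤ j → lam j = 0)
    (ℓ : ℕ) (hℓ : lam 0 ≤ ℓ) :
    Matrix.det (Matrix.of fun i j : Fin N =>
        (X i : MvPolynomial (Fin N) ℤ) ^ (lam j + (N - 1 - (j : ℕ)))) =
      Matrix.det (Matrix.of fun i j : Fin N =>
        (X i : MvPolynomial (Fin N) ℤ) ^ (N - 1 - (j : ℕ))) *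
      Matrix.det (Matrix.of fun i j : Fin ℓ =>
        eInt N ((conjugatePart lam (i + 1) : ℤ) - (i : ℕ) + (j : ℕ))) := by
  convert! statement2_general X hlam_anti (hlam_len N le_rfl) hℓ
  exact (aeval_X_left_apply _).symm
end

section
/- Let λ and τ be partitions with λ padded to length ℓ ≥ max(ℓ(λ), ℓ(τ)) and λ' , τ' their conjugates padded to length ℓ' ≥ max(λ₁, τ₁). Then in ℤ[x₁,…,x_N] one has the dual skew Jacobi–Trudi identity det( (h_{λ_i − τ_j − i + j}(x))_{1≤i,j≤ℓ} ) = det( (e_{λ'_i − τ'_j − i + j}(x))_{1≤i,j≤ℓ'} ); that is, s_{λ/τ} has equal expressions in complete homogeneous and in elementary symmetric polynomials, and consequently the involution exchanging h_k and e_k sends s_{λ/τ} to s_{λ'/τ'}. -/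
/-- The complete homogeneous symmetric polynomial in `N` variables with an integer index:
`h_k` for `k ≥ 0`, and `0` for `k < 0`. -/
noncomputable def hInt (N : ℕ) (k : ℤ) : MvPolynomial (Fin N) ℤ :=
  if 0 ≤ k then MvPolynomial.hsymm (Fin N) ℤ k.toNat else 0

/-
Following Macdonald: a power series `f` gives a lower triangular Toeplitz matrix, and products of
series become products of matrices, so `h(X) * e(-X) = 1` makes the matrices of `h(X)` and `e(-X)`
inverse to each other.  The boundary path of `λ` inside the `ℓ × ℓ'` rectangle numbers its steps
`0, …, ℓ + ℓ' - 1`; vertical steps are given by `λ`, horizontal ones by `λ'`.  The two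
Jacobi–Trudi determinants are thus complementary minors of the two matrices, and Jacobi's theorem
on minors of the inverse identifies them; its checkerboard signs turn `e(-X)` back into `e(X)`.
-/

open Finset PowerSeries Equiv
open MvPolynomial (hsymm esymm)

section ComplementaryMinors

theorem prod_Iio_ite_lt_of_forall_gt {n : ℕ} (σ : Perm (Fin n)) {b : Fin n}
    (hb : ∀ a, b < a → σ b < σ a) :
    ∏ a ∈ Iio b, (if σ a < σ b then 1 else -1 : ℤˣ) = (-1) ^ ((b : ℕ) + σ b) := by
  -- Everything that `σ` sends below `σ b` sits before `b`.
  have hfilter : {a ∈ Iio b | σ a < σ b} = (Iio (σ b)).map σ.symm.toEmbedding := by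
    ext a
    simp only [mem_filter, mem_Iio, mem_map_equiv, symm_symm, and_iff_right_iff_imp]
    intro ha
    by_contra hba
    rcases (not_lt.1 hba).eq_or_lt with rfl | hlt
    · exact ha.false
    · exact ha.asymm (hb a hlt)
  have hcard : (σ b : ℕ) + #{a ∈ Iio b | ¬ σ a < σ b} = b := by
    simpa [hfilter] using card_filter_add_card_filter_not (s := Iio b) fun a => σ a < σ b
  rw [prod_ite, prod_const_one, one_mul, prod_const,
    ← hcard, add_right_comm, pow_add, (Even.add_self _).neg_one_pow, one_mul]

variable {m n : ℕ}

theorem castAdd_lt_natAdd (i : Fin m) (j : Fin n) : Fin.castAdd n i < Fin.natAdd m j :=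
  i.isLt.trans_le (Nat.le_add_right m j)

theorem sign_eq_prod_of_strictMono_castAdd_natAdd {π : Perm (Fin (m + n))}
    (hl : StrictMono fun i => π (Fin.castAdd n i)) (hr : StrictMono fun j => π (Fin.natAdd m j)) :
    Perm.sign π = ∏ j : Fin n, (-1) ^ ((Fin.natAdd m j : ℕ) + π (Fin.natAdd m j)) := by
  have hleft (i : Fin m) : ∏ a ∈ Iio (Fin.castAdd n i),
      (if π a < π (Fin.castAdd n i) then 1 else -1 : ℤˣ) = 1 := by
    refine prod_eq_one fun a ha => if_pos ?_
    induction a using Fin.addCases with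
    | left k => exact hl ((Fin.strictMono_castAdd n).lt_iff_lt.1 (mem_Iio.1 ha))
    | right k => exact absurd (mem_Iio.1 ha) (castAdd_lt_natAdd i k).asymm
  rw [Perm.sign_eq_prod_prod_Iio, Fin.prod_univ_add, prod_eq_one fun i _ => hleft i, one_mul]
  refine prod_congr rfl fun j _ => prod_Iio_ite_lt_of_forall_gt π fun a ha => ?_
  induction a using Fin.addCases with
  | left k => exact absurd ha (castAdd_lt_natAdd k j).asymm
  | right k => exact hr ((Fin.natAdd_lt_natAdd_iff m).1 ha)

theorem sign_mul_sign_eq_prod_of_strictMono {π ρ : Perm (Fin (m + n))}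
    (hπl : StrictMono fun i => π (Fin.castAdd n i)) (hπr : StrictMono fun j => π (Fin.natAdd m j))
    (hρl : StrictMono fun i => ρ (Fin.castAdd n i)) (hρr : StrictMono fun j => ρ (Fin.natAdd m j)) :
    Perm.sign π * Perm.sign ρ =
      (∏ j : Fin n, (-1) ^ (ρ (Fin.natAdd m j) : ℕ)) *
        ∏ j : Fin n, (-1) ^ (π (Fin.natAdd m j) : ℕ) := by
  rw [sign_eq_prod_of_strictMono_castAdd_natAdd hπl hπr,
    sign_eq_prod_of_strictMono_castAdd_natAdd hρl hρr, ← prod_mul_distrib, ← prod_mul_distrib]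
  refine prod_congr rfl fun j _ => ?_
  rw [← pow_add, ← pow_add, neg_one_pow_congr]
  grind

theorem exists_perm_castAdd_natAdd {r : Fin m → Fin (m + n)} {r' : Fin n → Fin (m + n)}
    (hr : Function.Injective r) (hr' : Function.Injective r') (hrr' : ∀ i j, r i ≠ r' j) :
    ∃ π : Perm (Fin (m + n)),
      (fun i => π (Fin.castAdd n i)) = r ∧ (fun j => π (Fin.natAdd m j)) = r' :=
  have hinj : Function.Injective (Fin.append r r') := Fin.append_injective_iff.2 ⟨hr, hr', hrr'⟩
  ⟨.ofBijective _ (Finite.injective_iff_bijective.1 hinj),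
    funext fun i => Fin.append_left r r' i, funext fun j => Fin.append_right r r' j⟩

variable {R : Type*} [CommRing R]

theorem det_toBlocks₁₁_of_mul_eq_one {m n : Type*} [Fintype m] [DecidableEq m] [Fintype n]
    [DecidableEq n] {A B : Matrix (m ⊕ n) (m ⊕ n) R} (h : A * B = 1) :
    A.toBlocks₁₁.det = A.det * B.toBlocks₂₂.det := by
  have hblocks := h
  rw [← A.fromBlocks_toBlocks, ← B.fromBlocks_toBlocks, Matrix.fromBlocks_multiply,
    ← Matrix.fromBlocks_one, Matrix.fromBlocks_inj] at hblocks
  obtain ⟨-, h₁₂, -, h₂₂⟩ := hblocks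
  have hmul : A * Matrix.fromBlocks 1 B.toBlocks₁₂ 0 B.toBlocks₂₂ =
      Matrix.fromBlocks A.toBlocks₁₁ 0 A.toBlocks₂₁ 1 := by
    nth_rw 1 [← A.fromBlocks_toBlocks]
    simp [Matrix.fromBlocks_multiply, h₁₂, h₂₂]
  simpa using (congrArg Matrix.det hmul).symm

/-- **Jacobi's complementary minor theorem**, by permuting the chosen rows and columns to the
front. -/
theorem det_submatrix_of_mul_eq_one {A B : Matrix (Fin (m + n)) (Fin (m + n)) R} (h : A * B = 1)
    {r c : Fin m → Fin (m + n)} {r' c' : Fin n → Fin (m + n)}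
    (hr : StrictMono r) (hr' : StrictMono r') (hrr' : ∀ i j, r i ≠ r' j)
    (hc : StrictMono c) (hc' : StrictMono c') (hcc' : ∀ i j, c i ≠ c' j) :
    (A.submatrix r c).det =
      A.det * (Matrix.of fun i j => (-1) ^ ((c' i : ℕ) + r' j) * B (c' i) (r' j)).det := by
  obtain ⟨π, rfl, rfl⟩ := exists_perm_castAdd_natAdd hr.injective hr'.injective hrr'
  obtain ⟨ρ, rfl, rfl⟩ := exists_perm_castAdd_natAdd hc.injective hc'.injective hcc'
  have hinv : (A.submatrix π ρ).submatrix finSumFinEquiv finSumFinEquiv *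
      (B.submatrix ρ π).submatrix finSumFinEquiv finSumFinEquiv = 1 := by
    rw [Matrix.submatrix_mul_equiv, Matrix.submatrix_mul_equiv, h, Matrix.submatrix_one_equiv,
      Matrix.submatrix_one_equiv]
  have hdet : (A.submatrix π ρ).det = Perm.sign π * (Perm.sign ρ * A.det) := by
    rw [← Matrix.det_permute', ← Matrix.det_permute, Matrix.submatrix_submatrix]
    rfl
  have hsigns : ((Perm.sign π : ℤ) : R) * (Perm.sign ρ : ℤ) =
      (∏ j : Fin n, (-1) ^ (ρ (Fin.natAdd m j) : ℕ)) *
        ∏ j : Fin n, (-1) ^ (π (Fin.natAdd m j) : ℕ) := by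
    rw [← Int.cast_mul, ← Units.val_mul, sign_mul_sign_eq_prod_of_strictMono hr hr' hc hc']
    push_cast
    rfl
  calc
    _ = ((A.submatrix π ρ).submatrix finSumFinEquiv finSumFinEquiv).toBlocks₁₁.det := rfl
    _ = (A.submatrix π ρ).det *
        (B.submatrix (fun i => ρ (Fin.natAdd m i)) fun j => π (Fin.natAdd m j)).det := by
      rw [det_toBlocks₁₁_of_mul_eq_one hinv, Matrix.det_submatrix_equiv_self]
      rfl
    _ = _ := by
      rw [hdet, ← mul_assoc, hsigns, mul_right_comm, mul_comm, mul_assoc, ← Matrix.det_mul_row,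
        ← Matrix.det_mul_column]
      simp only [pow_add, mul_assoc]
      rfl

end ComplementaryMinors

section Toeplitz

variable {R : Type*}

section Semiring

variable [Semiring R]

/-- The coefficient of `X ^ k` in a power series for an integer exponent `k`, which is `0` for
`k < 0`. -/
noncomputable def intCoeff (f : R⟦X⟧) (k : ℤ) : R :=
  if 0 ≤ k then coeff k.toNat f else 0

theorem intCoeff_natCast_sub_natCast (f : R⟦X⟧) (a b : ℕ) :
    intCoeff f (a - b) = coeff a (X ^ b * f) := by
  simp [intCoeff, coeff_X_pow_mul']

/-- The `n × n` lower triangular Toeplitz matrix of a power series. Over a commutative ring, it is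
the matrix of multiplication by `f` on power series modulo `X ^ n`, in the basis of powers of
`X`. -/
noncomputable def toeplitz (n : ℕ) (f : R⟦X⟧) : Matrix (Fin n) (Fin n) R :=
  Matrix.of fun a b => intCoeff f ((a : ℕ) - (b : ℕ))

variable {n : ℕ}

theorem toeplitz_apply (f : R⟦X⟧) (a b : Fin n) :
    toeplitz n f a b = coeff a (X ^ (b : ℕ) * f) :=
  intCoeff_natCast_sub_natCast f a b

theorem coeff_mul_eq_sum_toeplitz (f g : R⟦X⟧) (a : Fin n) :
    coeff a (f * g) = ∑ b : Fin n, toeplitz n f a b * coeff b g := by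
  simp only [toeplitz_apply, coeff_X_pow_mul', ite_mul, zero_mul]
  rw [Fin.sum_univ_eq_sum_range
    (fun b => if b ≤ (a : ℕ) then coeff (a - b) f * coeff b g else 0), ← sum_filter, coeff_mul,
    ← Nat.sum_antidiagonal_swap, Nat.sum_antidiagonal_eq_sum_range_succ_mk]
  refine sum_congr ?_ fun _ _ => rfl
  ext b
  simp only [mem_range, mem_filter]
  omega

variable (n)

theorem toeplitz_mul (f g : R⟦X⟧) : toeplitz n (f * g) = toeplitz n f * toeplitz n g := by
  ext a c
  rw [toeplitz_apply, ← mul_assoc, X_pow_mul, mul_assoc, coeff_mul_eq_sum_toeplitz]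
  simp only [Matrix.mul_apply, toeplitz_apply g]

theorem toeplitz_one : toeplitz n (1 : R⟦X⟧) = 1 := by
  ext a b
  simp [toeplitz_apply, coeff_X_pow, Matrix.one_apply, Fin.ext_iff]

end Semiring

variable [CommRing R]

theorem neg_one_pow_mul_intCoeff_evalNegHom (f : R⟦X⟧) (a b : ℕ) :
    (-1) ^ (a + b) * intCoeff (evalNegHom f) (a - b) = intCoeff f (a - b) := by
  simp only [intCoeff_natCast_sub_natCast, coeff_X_pow_mul', evalNegHom, coeff_rescale]
  split_ifs with hba
  · have heven : Even (a + b + (a - b)) := ⟨a, by omega⟩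
    rw [← mul_assoc, ← pow_add, heven.neg_one_pow, one_mul]
  · exact mul_zero _

theorem det_toeplitz (n : ℕ) (f : R⟦X⟧) : (toeplitz n f).det = constantCoeff f ^ n := by
  rw [Matrix.det_of_isLowerTriangular]
  · simp [toeplitz, intCoeff]
  · intro a b hab
    have hba : ¬ (b : ℕ) ≤ a := Nat.not_le.2 hab
    rw [toeplitz_apply, coeff_X_pow_mul', if_neg hba]

end Toeplitz

section BoundaryPath

variable {l : ℕ → ℕ} {m n : ℕ}

theorem lt_conjugatePart_iff_s7 (hl : Antitone l) {k : ℕ} (hm : l m < k) {i : ℕ} :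
    i < conjugatePart l k ↔ k ≤ l i := by
  have hbound {s : ℕ} (hs : l s < k) : {j | k ≤ l j} ⊆ Set.Iio s := fun _ hj =>
    lt_of_not_ge fun hsj => (hs.trans_le hj).not_ge (hl hsj)
  refine ⟨fun hi => ?_, fun hi => ?_⟩
  · by_contra! hlt
    have hcard := Set.ncard_le_ncard (hbound hlt) (Set.finite_Iio i)
    rw [Set.ncard_Iio_nat] at hcard
    exact hi.not_ge hcard
  · have hsub : Set.Iic i ⊆ {j | k ≤ l j} := fun _ hj => hi.trans (hl hj)
    have hcard := Set.ncard_le_ncard hsub ((Set.finite_Iio m).subset (hbound hm))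
    rwa [Set.ncard_Iic_nat] at hcard

theorem conjugatePart_le (hl : Antitone l) {k : ℕ} (hm : l m < k) : conjugatePart l k ≤ m :=
  not_lt.1 fun h => hm.not_ge ((lt_conjugatePart_iff_s7 hl hm).1 h)

theorem conjugatePart_le_conjugatePart (hl : Antitone l) {j k : ℕ} (hm : l m < j) (hjk : j ≤ k) :
    conjugatePart l k ≤ conjugatePart l j :=
  Set.ncard_le_ncard (fun _ hi => hjk.trans hi)
    ((Set.finite_Iio m).subset fun _ hi => lt_of_not_ge fun h => (hm.trans_le hi).not_ge (hl h))

/-- The position of the `i`-th vertical step, counted from the bottom left corner, on the boundary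
path of the partition `l` inside a rectangle with `m` rows and `n` columns. The bottom row is the
last part, hence the `Fin.rev`. -/
def verticalStep (m : ℕ) (hn : ∀ i, l i ≤ n) (i : Fin m) : Fin (m + n) :=
  ⟨l i.rev + i, by have := hn i.rev; omega⟩

/-- The position of the `j`-th horizontal step on the boundary path of the partition `l` inside a
rectangle with `m` rows and `n` columns. The subtraction is not truncated, since column `j` has at
most `m` boxes. -/
noncomputable def horizontalStep (l : ℕ → ℕ) (m n : ℕ) (j : Fin n) : Fin (m + n) :=
  ⟨m + j - conjugatePart l (j + 1), by omega⟩

theorem strictMono_verticalStep (hl : Antitone l) (hn : ∀ i, l i ≤ n) :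
    StrictMono (verticalStep m hn) := fun _ _ hij =>
  Nat.add_lt_add_of_le_of_lt (hl (Fin.rev_le_rev.2 hij.le)) hij

theorem natCast_horizontalStep (hl : Antitone l) (hm : l m = 0) (j : Fin n) :
    ((horizontalStep l m n j : ℕ) : ℤ) = m + (j : ℕ) - conjugatePart l (j + 1) := by
  have hle : conjugatePart l (j + 1) ≤ m := conjugatePart_le hl (by omega)
  simp only [horizontalStep]
  omega

theorem strictMono_horizontalStep (hl : Antitone l) (hm : l m = 0) :
    StrictMono (horizontalStep l m n) := by
  intro i j hij
  have hanti : conjugatePart l (j + 1) ≤ conjugatePart l (i + 1) :=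
    conjugatePart_le_conjugatePart hl (m := m) (by omega) (by omega)
  have hi := natCast_horizontalStep hl hm i
  have hj := natCast_horizontalStep hl hm j
  omega

theorem verticalStep_ne_horizontalStep (hl : Antitone l) (hn : ∀ i, l i ≤ n) (hm : l m = 0)
    (i : Fin m) (j : Fin n) : verticalStep m hn i ≠ horizontalStep l m n j := by
  intro heq
  have hbox : (i.rev : ℕ) < conjugatePart l (j + 1) ↔ j + 1 ≤ l i.rev :=
    lt_conjugatePart_iff_s7 hl (m := m) (by omega)
  have hj := natCast_horizontalStep hl hm j
  simp only [← heq, verticalStep] at hj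
  rw [Fin.val_rev] at hbox hj
  omega

end BoundaryPath

section GeneratingFunctions

variable (σ R : Type*) [Fintype σ]

theorem mk_hsymm_eq_prod [CommSemiring R] [DecidableEq σ] :
    mk (hsymm σ R) = ∏ i : σ, mk fun k => (MvPolynomial.X i : MvPolynomial σ R) ^ k := by
  ext1 d
  simp only [coeff_prod, coeff_mk, hsymm]
  refine sum_bij' (fun s _ => Multiset.toFinsupp (s : Multiset σ))
    (fun l hl => ⟨Finsupp.toMultiset l, ?_⟩) (fun s _ => ?_) (fun _ _ => mem_univ _)
    (fun s _ => Subtype.ext (by simp)) (fun l _ => by simp) (fun s _ => ?_)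
  · rw [Finsupp.card_toMultiset]
    exact (mem_finsuppAntidiag'.1 hl).1
  · rw [mem_finsuppAntidiag']
    exact ⟨(Finsupp.card_toMultiset _).symm.trans (by simp), subset_univ _⟩
  · simp only [Multiset.toFinsupp_apply]
    rw [prod_multiset_map_count]
    refine prod_subset (subset_univ _) fun i _ hi => ?_
    rw [Multiset.count_eq_zero.2 (Multiset.mem_toFinset.not.1 hi), pow_zero]

theorem mk_esymm_eq_prod [CommSemiring R] :
    mk (esymm σ R) = ∏ i : σ, (1 + C (MvPolynomial.X i : MvPolynomial σ R) * X) := by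
  ext1 d
  simp only [prod_one_add, prod_mul_distrib, prod_const, ← map_prod, map_sum,
    coeff_C_mul_X_pow, coeff_mk, esymm, ← sum_filter]
  congr 1
  ext t
  simp [mem_powersetCard, eq_comm]

theorem mk_hsymm_mul_evalNegHom_mk_esymm [CommRing R] [DecidableEq σ] :
    mk (hsymm σ R) * evalNegHom (mk (esymm σ R)) = 1 := by
  rw [mk_hsymm_eq_prod, mk_esymm_eq_prod, map_prod, ← prod_mul_distrib]
  refine prod_eq_one fun i _ => ?_
  set x : MvPolynomial σ R := MvPolynomial.X i
  have hneg : evalNegHom (1 + C x * X) = 1 - C x * X := by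
    ext1 d
    rcases d with _ | _ | d <;> simp [evalNegHom, coeff_C, coeff_one, coeff_succ_mul_X]
  have hgeom := congrArg (rescale x) (mk_one_mul_one_sub_eq_one (MvPolynomial σ R))
  rw [hneg]
  simpa only [map_mul, map_sub, map_one, rescale_X, rescale_mk, Pi.one_apply, mul_one] using hgeom

theorem intCoeff_mk_hsymm (N : ℕ) : intCoeff (mk (hsymm (Fin N) ℤ)) = hInt N := by
  ext1 k
  simp only [intCoeff, coeff_mk, hInt]

theorem intCoeff_mk_esymm (N : ℕ) : intCoeff (mk (esymm (Fin N) ℤ)) = eInt N := by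
  ext1 k
  simp only [intCoeff, coeff_mk, eInt]

end GeneratingFunctions

section JacobiTrudi

variable {R : Type*} {m n : ℕ} {lam tau : ℕ → ℕ}

theorem submatrix_rev_intCoeff_eq_submatrix_toeplitz [Semiring R] (f : R⟦X⟧)
    (hlam : ∀ i, lam i ≤ n) (htau : ∀ i, tau i ≤ n) :
    (Matrix.of fun i j : Fin m =>
      intCoeff f ((lam i : ℤ) - tau j - (i : ℕ) + (j : ℕ))).submatrix Fin.revPerm Fin.revPerm =
      (toeplitz (m + n) f).submatrix (verticalStep m hlam) (verticalStep m htau) := by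
  ext i j
  simp only [Matrix.submatrix_apply, Matrix.of_apply, toeplitz, verticalStep, Fin.revPerm_apply]
  congr 1
  grind

theorem of_neg_one_pow_mul_toeplitz_evalNegHom [CommRing R] {g : R⟦X⟧}
    (hlam : Antitone lam) (htau : Antitone tau) (hlam_pad : lam m = 0) (htau_pad : tau m = 0) :
    (Matrix.of fun i j : Fin n =>
      (-1) ^ ((horizontalStep tau m n i : ℕ) + horizontalStep lam m n j) *
        toeplitz (m + n) (evalNegHom g) (horizontalStep tau m n i) (horizontalStep lam m n j)) =
      (Matrix.of fun i j : Fin n => intCoeff g ((conjugatePart lam (i + 1) : ℤ) -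
        conjugatePart tau (j + 1) - (i : ℕ) + (j : ℕ))).transpose := by
  ext i j
  simp only [Matrix.of_apply, Matrix.transpose_apply, toeplitz]
  rw [neg_one_pow_mul_intCoeff_evalNegHom, natCast_horizontalStep htau htau_pad,
    natCast_horizontalStep hlam hlam_pad]
  congr 1
  ring

end JacobiTrudi

theorem statement7_general {R : Type*} [CommRing R] {m n : ℕ} {f g : R⟦X⟧}
    (hfg : f * evalNegHom g = 1) {lam tau : ℕ → ℕ} (hlam : Antitone lam) (htau : Antitone tau)
    (hlam_pad : lam m = 0) (htau_pad : tau m = 0)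
    (hlam_width : lam 0 ≤ n) (htau_width : tau 0 ≤ n) :
    Matrix.det (Matrix.of fun i j : Fin m =>
        intCoeff f ((lam i : ℤ) - tau j - (i : ℕ) + (j : ℕ))) =
      constantCoeff f ^ (m + n) * Matrix.det (Matrix.of fun i j : Fin n =>
        intCoeff g ((conjugatePart lam (i + 1) : ℤ) - conjugatePart tau (j + 1)
          - (i : ℕ) + (j : ℕ))) := by
  have hlam_le (i : ℕ) : lam i ≤ n := (hlam i.zero_le).trans hlam_width
  have htau_le (i : ℕ) : tau i ≤ n := (htau i.zero_le).trans htau_width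
  have hinv : toeplitz (m + n) f * toeplitz (m + n) (evalNegHom g) = 1 := by
    rw [← toeplitz_mul, hfg, toeplitz_one]
  have hminors := det_submatrix_of_mul_eq_one hinv
    (strictMono_verticalStep hlam hlam_le) (strictMono_horizontalStep hlam hlam_pad)
    (verticalStep_ne_horizontalStep hlam hlam_le hlam_pad)
    (strictMono_verticalStep htau htau_le) (strictMono_horizontalStep htau htau_pad)
    (verticalStep_ne_horizontalStep htau htau_le htau_pad)
  rw [← Matrix.det_submatrix_equiv_self Fin.revPerm,
    submatrix_rev_intCoeff_eq_submatrix_toeplitz f hlam_le htau_le, hminors, det_toeplitz,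
    of_neg_one_pow_mul_toeplitz_evalNegHom hlam htau hlam_pad htau_pad, Matrix.det_transpose]

/-- Let `λ`, `τ` be partitions padded with zeros to a common length
`ℓ ≥ max(ℓ(λ), ℓ(τ))`, and let their conjugates `λ'`, `τ'` be padded to a common length
`ℓ' ≥ max(λ₁, τ₁)`.  Then in `ℤ[x₁,…,x_N]` the dual skew Jacobi–Trudi identity holds:
`det((h_{λ_i - τ_j - i + j})_{1≤i,j≤ℓ}) = det((e_{λ'_i - τ'_j - i + j})_{1≤i,j≤ℓ'})`;
i.e. the skew Schur polynomial `s_{λ/τ}` has equal expressions in complete homogeneous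
and in elementary symmetric polynomials (so the involution exchanging `h_k` and `e_k`
sends `s_{λ/τ}` to `s_{λ'/τ'}`). -/
theorem statement7 (N ℓ ℓ' : ℕ) (lam tau : ℕ → ℕ)
    (hlam : Antitone lam) (htau : Antitone tau)
    (hlam_pad : ∀ j, ℓ ≤ j → lam j = 0) (htau_pad : ∀ j, ℓ ≤ j → tau j = 0)
    (hlam_width : lam 0 ≤ ℓ') (htau_width : tau 0 ≤ ℓ') :
    Matrix.det (Matrix.of fun i j : Fin ℓ =>
        hInt N ((lam i : ℤ) - tau j - (i : ℕ) + (j : ℕ))) =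
      Matrix.det (Matrix.of fun i j : Fin ℓ' =>
        eInt N ((conjugatePart lam (i + 1) : ℤ) - conjugatePart tau (j + 1)
          - (i : ℕ) + (j : ℕ))) := by
  simpa [intCoeff_mk_hsymm, intCoeff_mk_esymm] using
    statement7_general (mk_hsymm_mul_evalNegHom_mk_esymm (Fin N) ℤ) hlam htau
      (hlam_pad ℓ le_rfl) (htau_pad ℓ le_rfl) hlam_width htau_width
end

section
/- Let λ = (λ₁ ≥ … ≥ λ_n ≥ 0) and μ = (μ₁ ≥ … ≥ μ_m ≥ 0) be partitions, and let x = (x₁,…,x_N), y = (y₁,…,y_M) be two disjoint sets of variables. Let M be the (m+n) × (m+n) matrix with M_{ij} = h_{μ_{m+1−i} + i − j}(y) for 1 ≤ i ≤ m and M_{ij} = h_{λ_{i−m} − (i−m) + (j−m)}(x) for m < i ≤ m+n. Then det(M) = Σ_τ (−1)^{|τ|} s_{λ/τ}(x) · s_{μ/τ'}(y), where the sum ranges over all partitions τ with at most n parts each of size at most m; moreover the same identity holds with the sum ranging over all partitions τ, since all additional terms vanish. -/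
open MvPolynomial

/-- A partition: a weakly decreasing sequence of naturals, eventually zero
(`parts 0 = τ₁`, `parts 1 = τ₂`, …). -/
structure NatPartition where
  parts : ℕ → ℕ
  antitone : Antitone parts
  eventually_zero : ∃ K, ∀ j, K ≤ j → parts j = 0

/-- The size `|τ|`, the sum of the parts. -/
noncomputable def NatPartition.size (τ : NatPartition) : ℕ := ∑ᶠ j, τ.parts j

/-- The number of (nonzero) parts of `τ`. -/
noncomputable def NatPartition.length (τ : NatPartition) : ℕ :=
  Set.ncard {j : ℕ | τ.parts j ≠ 0}

/-- The summand `(-1)^{|τ|} s_{λ/τ}(x) · s_{μ/τ'}(y)`, the skew Schur polynomials being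
given by Jacobi–Trudi determinants padded to lengths `n + ℓ(τ)` resp. `m + τ₁`. -/
noncomputable def skewTerm (m n N M : ℕ) (lam mu : ℕ → ℕ) (τ : NatPartition) :
    MvPolynomial (Fin N ⊕ Fin M) ℤ :=
  (-1 : MvPolynomial (Fin N ⊕ Fin M) ℤ) ^ τ.size *
    rename Sum.inl (Matrix.det (Matrix.of fun i j : Fin (n + τ.length) =>
      hInt N ((lam i : ℤ) - τ.parts j - (i : ℕ) + (j : ℕ)))) *
    rename Sum.inr (Matrix.det (Matrix.of fun i j : Fin (m + τ.parts 0) =>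
      hInt M ((mu i : ℤ) - conjugatePart τ.parts ((j : ℕ) + 1) - (i : ℕ) + (j : ℕ))))

/-!
Expand `det Mmat` along its first `m` rows. A choice of `n` columns for the last `n` rows is a
lattice path in the rectangle with `n` rows and `m` columns, that is, the boundary of a partition
`τ` in that rectangle: the row steps of the path are at positions `m + k - τ_k`, and the column
steps, which select the complementary columns, are governed by `τ'`. The inversions of the
corresponding shuffle are the cells of `τ`, so its sign is `(-1)^{|τ|}`, and the two complementary
minors are the Jacobi–Trudi determinants of `λ/τ` and `μ/τ'`. A `τ` outside the rectangle produces
a Jacobi–Trudi matrix with a zero block touching the diagonal, hence no contribution.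
-/

section LaplaceExpansion

variable {ι k l m n R : Type*}

theorem exists_sumCongr_trans_eq_iff [Finite m] [Finite n] {e σ : m ⊕ n ≃ l} :
    (∃ α β, (Equiv.sumCongr α β).trans e = σ) ↔
      Set.range (e ∘ Sum.inr) = Set.range (σ ∘ Sum.inr) := by
  constructor
  · rintro ⟨α, β, rfl⟩
    exact (β.surjective.range_comp (e ∘ Sum.inr)).symm
  · intro h
    have hmaps : Set.MapsTo (σ.trans e.symm) (Set.range Sum.inl) (Set.range Sum.inl) := by
      rintro _ ⟨b, rfl⟩
      rcases hx : e.symm (σ (Sum.inl b)) with c | c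
      · exact ⟨c, hx.symm⟩
      · obtain ⟨d, hd⟩ : σ (Sum.inl b) ∈ Set.range (σ ∘ Sum.inr) :=
          h ▸ ⟨c, ((Equiv.symm_apply_eq e).1 hx).symm⟩
        exact absurd (σ.injective hd) Sum.inr_ne_inl
    obtain ⟨⟨α, β⟩, hαβ⟩ := Equiv.Perm.mem_sumCongrHom_range_of_perm_mapsTo_inl hmaps
    refine ⟨α, β, ?_⟩
    rw [show Equiv.sumCongr α β = σ.trans e.symm from hαβ, Equiv.trans_assoc,
      Equiv.symm_trans_self, Equiv.trans_refl]

-- `he` says that the `e i` represent the cosets of `Perm m × Perm n`, as the image of the right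
-- summand determines the coset.
theorem bijective_sumCongr_trans [Finite m] [Finite n] {e : ι → m ⊕ n ≃ l}
    (he : ∀ σ : m ⊕ n ≃ l, ∃! i, Set.range (e i ∘ Sum.inr) = Set.range (σ ∘ Sum.inr)) :
    Function.Bijective fun p : ι × Equiv.Perm m × Equiv.Perm n =>
      (Equiv.sumCongr p.2.1 p.2.2).trans (e p.1) := by
  constructor
  · rintro ⟨i, α, β⟩ ⟨j, γ, δ⟩ h
    obtain rfl : i = j := (he _).unique (exists_sumCongr_trans_eq_iff.1 ⟨α, β, h⟩)
      (exists_sumCongr_trans_eq_iff.1 ⟨γ, δ, rfl⟩)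
    have hsum : Equiv.sumCongr α β = Equiv.sumCongr γ δ :=
      Equiv.ext fun x => (e i).injective (Equiv.congr_fun h x)
    exact congrArg (Prod.mk i) (Equiv.Perm.sumCongrHom_injective hsum)
  · intro σ
    obtain ⟨i, hi, -⟩ := he σ
    obtain ⟨α, β, h⟩ := exists_sumCongr_trans_eq_iff.2 hi
    exact ⟨(i, α, β), h⟩

variable [Fintype k] [Fintype l] [Fintype m] [Fintype n]
  [DecidableEq k] [DecidableEq l] [DecidableEq m] [DecidableEq n] [CommRing R]

theorem det_eq_sum_equiv (A : Matrix l l R) (r : k ≃ l) :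
    A.det = ∑ e : k ≃ l, (Equiv.Perm.sign (r.symm.trans e) : ℤ) * ∏ x, A (r x) (e x) := by
  rw [← Matrix.det_transpose, Matrix.det_apply', ← (Equiv.equivCongr r (.refl l)).sum_comp]
  refine Finset.sum_congr rfl fun e _ => ?_
  rw [← r.prod_comp]
  simp [Equiv.equivCongr]

theorem det_eq_sum_sign_mul_det_mul_det [Fintype ι] (A : Matrix l l R) (r : m ⊕ n ≃ l)
    {e : ι → m ⊕ n ≃ l}
    (he : ∀ σ : m ⊕ n ≃ l, ∃! i, Set.range (e i ∘ Sum.inr) = Set.range (σ ∘ Sum.inr)) :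
    A.det = ∑ i, (Equiv.Perm.sign (r.symm.trans (e i)) : ℤ) *
      (A.submatrix (r ∘ Sum.inl) (e i ∘ Sum.inl)).det *
      (A.submatrix (r ∘ Sum.inr) (e i ∘ Sum.inr)).det := by
  rw [det_eq_sum_equiv A r, ← (bijective_sumCongr_trans he).sum_comp, Fintype.sum_prod_type]
  refine Finset.sum_congr rfl fun i _ => ?_
  have hsign (α : Equiv.Perm m) (β : Equiv.Perm n) :
      Equiv.Perm.sign (r.symm.trans ((Equiv.sumCongr α β).trans (e i))) =
        Equiv.Perm.sign (r.symm.trans (e i)) * (Equiv.Perm.sign α * Equiv.Perm.sign β) := by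
    rw [← Equiv.Perm.sign_sumCongr, ← Equiv.Perm.sign_symm_trans_trans (Equiv.sumCongr α β) r,
      mul_comm, mul_comm, ← Equiv.Perm.sign_trans]
    congr 1
    ext x
    simp
  rw [← Matrix.det_transpose, Matrix.det_apply', ← Matrix.det_transpose, Matrix.det_apply',
    mul_assoc, Finset.sum_mul_sum, ← Finset.sum_product', Finset.mul_sum]
  refine Finset.sum_congr rfl fun ⟨α, β⟩ _ => ?_
  simp only [hsign, Fintype.prod_sum_type, Matrix.transpose_apply, Matrix.submatrix_apply,
    Function.comp_apply, Equiv.trans_apply, Equiv.sumCongr_apply, Sum.map_inl, Sum.map_inr]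
  push_cast
  ring

end LaplaceExpansion

section Shuffle

open Finset

variable {m n : ℕ}

theorem sign_eq_prod_inversions {p : ℕ} (σ : Equiv.Perm (Fin p)) :
    Equiv.Perm.sign σ = ∏ j, ∏ i, if i < j ∧ σ j < σ i then -1 else 1 := by
  simp_rw [Equiv.Perm.sign_eq_prod_prod_Iio, ite_and]
  refine prod_congr rfl fun j _ => ?_
  rw [← prod_filter, filter_gt_eq_Iio]
  refine prod_congr rfl fun i hi => ?_
  rcases (σ.injective.ne (mem_Iio.1 hi).ne).lt_or_gt with h | h <;> simp [h, h.not_gt]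

theorem sign_eq_neg_one_pow_of_strictMono {σ : Equiv.Perm (Fin (m + n))}
    (hl : StrictMono (σ ∘ Fin.castAdd n)) (hr : StrictMono (σ ∘ Fin.natAdd m)) :
    Equiv.Perm.sign σ =
      (-1) ^ ∑ k : Fin n, #{b : Fin m | σ (Fin.natAdd m k) < σ (Fin.castAdd n b)} := by
  have hll (b c : Fin m) :
      ¬ (Fin.castAdd n c < Fin.castAdd n b ∧ σ (Fin.castAdd n b) < σ (Fin.castAdd n c)) :=
    fun h => (hl h.1).not_gt h.2
  have hrr (j k : Fin n) :
      ¬ (Fin.natAdd m j < Fin.natAdd m k ∧ σ (Fin.natAdd m k) < σ (Fin.natAdd m j)) :=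
    fun h => (hr ((Fin.natAdd_lt_natAdd_iff m).1 h.1)).not_gt h.2
  have hlr (b : Fin m) (k : Fin n) : Fin.castAdd n b < Fin.natAdd m k :=
    Fin.lt_def.2 (b.2.trans_le (Nat.le_add_right m k))
  simp only [sign_eq_prod_inversions, Fin.prod_univ_add, hll, hrr, hlr, (hlr _ _).not_gt,
    false_and, true_and, if_false, prod_const_one, one_mul, mul_one, ← prod_pow_eq_pow_sum]
  simp only [prod_ite, prod_const, one_pow, mul_one]

theorem add_sub_le_apply_of_strictMono {p : ℕ} {f : Fin n → Fin p} (hf : StrictMono f) {j k : Fin n}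
    (hjk : j ≤ k) : (f j : ℕ) + (k - j) ≤ f k := by
  have hcard := card_le_card_of_injOn f (s := Ioc j k) (t := Ioc (f j) (f k))
    (fun i hi => by simpa [hf.lt_iff_lt, hf.le_iff_le] using hi) hf.injective.injOn
  rw [Fin.card_Ioc, Fin.card_Ioc] at hcard
  have := Fin.le_def.1 (hf.monotone hjk)
  omega

theorem card_filter_rev_lt {t : ℕ} (ht : t ≤ m) : #{b : Fin m | (b.rev : ℕ) < t} = t :=
  calc #{b : Fin m | (b.rev : ℕ) < t} = #{b : Fin m | (b : ℕ) < t} :=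
        card_equiv Fin.revPerm (by simp)
    _ = t := by rw [← Fintype.card_subtype, Fintype.card_fin_lt_of_le ht]

end Shuffle

namespace NatPartition

open scoped Finset

attribute [ext] NatPartition

theorem lt_conjugatePart_iff (τ : NatPartition) {b k : ℕ} :
    k < conjugatePart τ.parts (b + 1) ↔ b < τ.parts k := by
  obtain ⟨K, hK⟩ := τ.eventually_zero
  have hfin : {j | b + 1 ≤ τ.parts j}.Finite := (Set.finite_Iio K).subset fun j hj =>
    Set.mem_Iio.2 <| not_le.1 fun hKj => by simp [hK j hKj] at hj
  constructor
  · contrapose!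
    intro hb
    have hsub : {j | b + 1 ≤ τ.parts j} ⊆ Set.Iio k := fun j hj =>
      not_le.1 fun hkj => absurd (τ.antitone hkj) (not_le.2 (hb.trans_lt hj))
    simpa [conjugatePart] using Set.ncard_le_ncard hsub
  · intro hb
    have hsub : Set.Iic k ⊆ {j | b + 1 ≤ τ.parts j} := fun j hj => hb.trans_le (τ.antitone hj)
    simpa [conjugatePart] using Set.ncard_le_ncard hsub hfin

/-- The conjugate partition `τ'`, with the zero-based indexing of `NatPartition.parts`. -/
noncomputable def conjugate (τ : NatPartition) : NatPartition where
  parts b := conjugatePart τ.parts (b + 1)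
  antitone _ _ hbc := le_of_forall_lt fun _ hk =>
    τ.lt_conjugatePart_iff.2 (hbc.trans_lt (τ.lt_conjugatePart_iff.1 hk))
  eventually_zero := ⟨τ.parts 0, fun _ hb =>
    Nat.eq_zero_of_not_pos fun hpos => hb.not_gt (τ.lt_conjugatePart_iff.1 hpos)⟩

variable {m n : ℕ} {τ : NatPartition}

theorem lt_conjugate_parts_iff {b k : ℕ} : k < τ.conjugate.parts b ↔ b < τ.parts k :=
  τ.lt_conjugatePart_iff

theorem conjugate_parts_zero (τ : NatPartition) : τ.conjugate.parts 0 = τ.length := by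
  simp [conjugate, length, conjugatePart, Nat.pos_iff_ne_zero]

theorem lt_length_iff : n < τ.length ↔ 0 < τ.parts n := by
  rw [← conjugate_parts_zero, lt_conjugate_parts_iff]

/-- The partitions whose diagram fits in the rectangle with `n` rows and `m` columns. -/
def box (m n : ℕ) : Set NatPartition := {τ | τ.length ≤ n ∧ τ.parts 0 ≤ m}

theorem conjugate_mem_box (hτ : τ ∈ box m n) : τ.conjugate ∈ box n m :=
  ⟨not_lt.1 fun h => hτ.2.not_gt (lt_conjugate_parts_iff.1 (lt_length_iff.1 h)),
    τ.conjugate_parts_zero.trans_le hτ.1⟩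

theorem parts_le_of_mem_box (hτ : τ ∈ box m n) (k : ℕ) : τ.parts k ≤ m :=
  (τ.antitone k.zero_le).trans hτ.2

theorem parts_eq_zero_of_mem_box (hτ : τ ∈ box m n) {k : ℕ} (hk : n ≤ k) : τ.parts k = 0 :=
  Nat.eq_zero_of_not_pos fun hpos => (hτ.1.trans hk).not_gt (lt_length_iff.2 hpos)

theorem size_eq_sum_of_mem_box (hτ : τ ∈ box m n) : τ.size = ∑ k : Fin n, τ.parts k := by
  rw [size, finsum_eq_sum_of_support_subset (s := Finset.range n), Finset.sum_range]
  intro k hk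
  by_contra hkn
  exact hk (parts_eq_zero_of_mem_box hτ (by simpa using hkn))

theorem ext_of_mem_box {σ : NatPartition} (hσ : σ ∈ box m n) (hτ : τ ∈ box m n)
    (h : ∀ k < n, σ.parts k = τ.parts k) : σ = τ := by
  ext k
  rcases lt_or_ge k n with hk | hk
  · exact h k hk
  · rw [parts_eq_zero_of_mem_box hσ hk, parts_eq_zero_of_mem_box hτ hk]

/-- The lattice path bounding `τ` from the top right to the bottom left corner of its rectangle has
`m` column steps and `n` row steps, numbered from `0`; `rowStep τ k` is the position of the step
along row `k`, preceded by `k` row steps and `m - τ_k` column steps. -/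
def rowStep (τ : box m n) (k : Fin n) : Fin (m + n) :=
  ⟨m + k - τ.1.parts k, by omega⟩

/-- The position in the boundary path of `τ` of its `b`-th column step. The path meets the columns
from right to left, so this is the step along column `m - 1 - b`. -/
noncomputable def colStep (τ : box m n) (b : Fin m) : Fin (m + n) :=
  ⟨b + τ.1.conjugate.parts b.rev, by
    have := parts_le_of_mem_box (conjugate_mem_box τ.2) b.rev
    omega⟩

theorem rowStep_lt_colStep_iff (τ : box m n) {b : Fin m} {k : Fin n} :
    rowStep τ k < colStep τ b ↔ (b.rev : ℕ) < τ.1.parts k := by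
  have h₁ := lt_conjugate_parts_iff (τ := τ.1) (b := b.rev) (k := k)
  have h₂ := parts_le_of_mem_box τ.2 k
  have h₃ := Fin.val_rev b
  simp only [rowStep, colStep, Fin.mk_lt_mk]
  omega

theorem colStep_ne_rowStep (τ : box m n) (b : Fin m) (k : Fin n) : colStep τ b ≠ rowStep τ k := by
  have h₁ := lt_conjugate_parts_iff (τ := τ.1) (b := b.rev) (k := k)
  have h₂ := parts_le_of_mem_box τ.2 k
  have h₃ := Fin.val_rev b
  simp only [rowStep, colStep, ne_eq, Fin.mk.injEq]
  omega

theorem colStep_strictMono (τ : box m n) : StrictMono (colStep τ) := by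
  intro b c hbc
  have := τ.1.conjugate.antitone (Fin.le_def.1 (Fin.rev_le_rev.2 hbc.le))
  simp only [colStep, Fin.mk_lt_mk]
  omega

theorem rowStep_strictMono (τ : box m n) : StrictMono (rowStep τ) := by
  intro j k hjk
  have h₁ := τ.1.antitone (Fin.le_def.1 hjk.le)
  have h₂ := parts_le_of_mem_box τ.2 j
  simp only [rowStep, Fin.mk_lt_mk]
  omega

theorem rowStep_injective : Function.Injective (rowStep : box m n → Fin n → Fin (m + n)) := by
  intro σ τ h
  refine Subtype.ext (ext_of_mem_box σ.2 τ.2 fun k hk => ?_)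
  have h₁ := Fin.val_eq_of_eq (congrFun h ⟨k, hk⟩)
  have h₂ := parts_le_of_mem_box σ.2 k
  have h₃ := parts_le_of_mem_box τ.2 k
  simp only [rowStep] at h₁
  omega

noncomputable instance : Fintype (box m n) :=
  haveI := Finite.of_injective _ (rowStep_injective (m := m) (n := n))
  Fintype.ofFinite _

/-- The numbering of all steps of the boundary path of `τ`, column steps being the left summand. -/
noncomputable def boundaryEquiv (τ : box m n) : Fin m ⊕ Fin n ≃ Fin (m + n) :=
  Equiv.ofBijective (Sum.elim (colStep τ) (rowStep τ)) <|
    (Fintype.bijective_iff_injective_and_card _).2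
      ⟨(colStep_strictMono τ).injective.sumElim (rowStep_strictMono τ).injective
        (colStep_ne_rowStep τ), by simp⟩

theorem sign_boundaryEquiv (τ : box m n) :
    Equiv.Perm.sign (finSumFinEquiv.symm.trans (boundaryEquiv τ)) = (-1) ^ τ.1.size := by
  have hcol : finSumFinEquiv.symm.trans (boundaryEquiv τ) ∘ Fin.castAdd n = colStep τ := by
    ext; simp [boundaryEquiv]
  have hrow : finSumFinEquiv.symm.trans (boundaryEquiv τ) ∘ Fin.natAdd m = rowStep τ := by
    ext; simp [boundaryEquiv]
  rw [sign_eq_neg_one_pow_of_strictMono (hcol ▸ colStep_strictMono τ)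
    (hrow ▸ rowStep_strictMono τ), size_eq_sum_of_mem_box τ.2]
  congr 1
  refine Finset.sum_congr rfl fun k _ => ?_
  change #{b | (_ ∘ Fin.natAdd m) k < (_ ∘ Fin.castAdd n) b} = _
  simp_rw [hcol, hrow, rowStep_lt_colStep_iff]
  rw [card_filter_rev_lt (parts_le_of_mem_box τ.2 k)]

/-- The partition whose boundary path in the rectangle has its row steps at the positions `f`. -/
def ofStrictMono (f : Fin n → Fin (m + n)) (hf : StrictMono f) : NatPartition where
  parts k := if h : k < n then m + k - f ⟨k, h⟩ else 0
  antitone j k hjk := by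
    dsimp only
    split_ifs with hk hj
    · have := add_sub_le_apply_of_strictMono hf (j := ⟨j, hj⟩) (k := ⟨k, hk⟩) hjk
      dsimp only at this
      omega
    all_goals omega
  eventually_zero := ⟨n, fun j hj => by simp [not_lt.2 hj]⟩

theorem ofStrictMono_mem_box {f : Fin n → Fin (m + n)} (hf : StrictMono f) :
    ofStrictMono f hf ∈ box m n := by
  refine ⟨not_lt.1 fun h => ?_, ?_⟩
  · simpa [ofStrictMono] using lt_length_iff.1 h
  · simp only [ofStrictMono]
    split_ifs <;> omega

theorem rowStep_ofStrictMono {f : Fin n → Fin (m + n)} (hf : StrictMono f) :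
    rowStep ⟨ofStrictMono f hf, ofStrictMono_mem_box hf⟩ = f := by
  ext k
  have hlast := add_sub_le_apply_of_strictMono hf (j := k) (k := ⟨n - 1, Nat.sub_one_lt_of_lt k.2⟩)
    (Fin.le_def.2 (Nat.le_sub_one_of_lt k.2))
  have := (f ⟨n - 1, by omega⟩).2
  simp only [rowStep, ofStrictMono, Fin.is_lt, dif_pos, Fin.eta] at hlast ⊢
  omega

theorem existsUnique_range_rowStep (J : Finset (Fin (m + n))) (hJ : J.card = n) :
    ∃! τ : box m n, Set.range (rowStep τ) = J := by
  have hmono := (J.orderEmbOfFin hJ).strictMono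
  refine ⟨⟨_, ofStrictMono_mem_box hmono⟩, ?_, fun τ hτ => rowStep_injective ?_⟩
  · dsimp only
    rw [rowStep_ofStrictMono, Finset.range_orderEmbOfFin]
  · rw [rowStep_ofStrictMono, ← (rowStep_strictMono τ).range_inj hmono, hτ,
      Finset.range_orderEmbOfFin]

theorem existsUnique_range_boundaryEquiv (σ : Fin m ⊕ Fin n ≃ Fin (m + n)) :
    ∃! τ : box m n, Set.range (boundaryEquiv τ ∘ Sum.inr) = Set.range (σ ∘ Sum.inr) := by
  have hinj : Function.Injective (σ ∘ Sum.inr) := σ.injective.comp Sum.inr_injective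
  simpa [boundaryEquiv, Function.comp_def] using existsUnique_range_rowStep
    (Finset.univ.image (σ ∘ Sum.inr)) (by simp [Finset.card_image_of_injective _ hinj])

theorem det_eq_sum_box {R : Type*} [CommRing R] (A : Matrix (Fin (m + n)) (Fin (m + n)) R) :
    A.det = ∑ τ : box m n, (-1) ^ τ.1.size *
      (A.submatrix (Fin.castAdd n) (colStep τ)).det *
      (A.submatrix (Fin.natAdd m) (rowStep τ)).det := by
  rw [det_eq_sum_sign_mul_det_mul_det A finSumFinEquiv existsUnique_range_boundaryEquiv]
  refine Finset.sum_congr rfl fun τ _ => ?_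
  rw [sign_boundaryEquiv]
  push_cast
  rfl

end NatPartition

section JacobiTrudi

variable {R : Type*} [CommRing R]

/-- The `ℓ × ℓ` Jacobi–Trudi matrix of `ν/σ` over a sequence `h`. Its determinant is the skew Schur
polynomial `s_{ν/σ}` when `h` is the sequence of complete homogeneous symmetric polynomials. -/
def jacobiTrudi (h : ℤ → R) (ν σ : ℕ → ℕ) (ℓ : ℕ) : Matrix (Fin ℓ) (Fin ℓ) R :=
  Matrix.of fun i j => h ((ν i : ℤ) - σ j - (i : ℕ) + (j : ℕ))

theorem det_eq_zero_of_corner_eq_zero {ℓ : ℕ} (A : Matrix (Fin ℓ) (Fin ℓ) R) (k : Fin ℓ)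
    (hA : ∀ i j, k ≤ i → j ≤ k → A i j = 0) : A.det = 0 := by
  have hblock : (A.toSquareBlockProp fun i => ¬ i < k).det = 0 :=
    Matrix.det_eq_zero_of_column_eq_zero ⟨k, lt_irrefl k⟩ fun i => hA i k (not_lt.1 i.2) le_rfl
  rw [A.twoBlockTriangular_det (· < k) fun i hi j hj => hA i j (not_lt.1 hi) hj.le, hblock,
    mul_zero]

variable {h : ℤ → R} {ν σ : ℕ → ℕ} {n ℓ : ℕ}

theorem det_jacobiTrudi_eq_zero (hneg : ∀ k < 0, h k = 0) (hν : ∀ i, n ≤ i → ν i = 0)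
    (hσ : ∀ j ≤ n, 0 < σ j) (hn : n < ℓ) : (jacobiTrudi h ν σ ℓ).det = 0 := by
  refine det_eq_zero_of_corner_eq_zero _ ⟨n, hn⟩ fun i j hi hj => hneg _ ?_
  rw [Fin.le_def] at hi hj
  have hνi := hν i hi
  have hσj := hσ j hj
  dsimp only at hi hj
  omega

theorem det_jacobiTrudi_add (hneg : ∀ k < 0, h k = 0) (hzero : h 0 = 1)
    (hν : ∀ i, n ≤ i → ν i = 0) (hσ : ∀ j, n ≤ j → σ j = 0) (p : ℕ) :
    (jacobiTrudi h ν σ (n + p)).det = (jacobiTrudi h ν σ n).det := by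
  have hbelow (i j : ℕ) (hi : n ≤ i) (hji : j < i) : h ((ν i : ℤ) - σ j - i + j) = 0 := by
    have hνi := hν i hi
    exact hneg _ (by omega)
  let B := (jacobiTrudi h ν σ (n + p)).submatrix finSumFinEquiv finSumFinEquiv
  have h₂₁ : B.toBlocks₂₁ = 0 := by
    ext i j
    exact hbelow _ _ (Nat.le_add_right n i) (j.is_lt.trans_le (Nat.le_add_right n i))
  have h₂₂ : B.toBlocks₂₂.det = 1 := by
    have htri : B.toBlocks₂₂.IsUpperTriangular := fun i j hji =>
      hbelow _ _ (Nat.le_add_right n i) (Nat.add_lt_add_left hji n)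
    rw [Matrix.det_of_isUpperTriangular htri]
    refine Finset.prod_eq_one fun i _ => ?_
    simp [B, Matrix.toBlocks₂₂, jacobiTrudi, hν, hσ, hzero]
  calc (jacobiTrudi h ν σ (n + p)).det = B.det := (Matrix.det_submatrix_equiv_self _ _).symm
    _ = B.toBlocks₁₁.det * B.toBlocks₂₂.det := by
      rw [← Matrix.det_fromBlocks_zero₂₁ _ B.toBlocks₁₂, ← h₂₁, Matrix.fromBlocks_toBlocks]
    _ = (jacobiTrudi h ν σ n).det := by rw [h₂₂, mul_one]; rfl

theorem det_eq_sum_box_jacobiTrudi {m : ℕ} (a b : ℤ → R) (lam mu : ℕ → ℕ)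
    (A : Matrix (Fin (m + n)) (Fin (m + n)) R)
    (htop : ∀ i j : Fin (m + n), (i : ℕ) < m →
      A i j = b ((mu (m - 1 - (i : ℕ)) : ℤ) + (i : ℕ) - (j : ℕ)))
    (hbot : ∀ i j : Fin (m + n), m ≤ (i : ℕ) →
      A i j = a ((lam ((i : ℕ) - m) : ℤ) - (i : ℕ) + (j : ℕ))) :
    A.det = ∑ τ : NatPartition.box m n, (-1) ^ τ.1.size *
      (jacobiTrudi a lam τ.1.parts n).det * (jacobiTrudi b mu τ.1.conjugate.parts m).det := by
  rw [NatPartition.det_eq_sum_box]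
  refine Finset.sum_congr rfl fun τ _ => ?_
  have hrow : A.submatrix (Fin.natAdd m) (NatPartition.rowStep τ) =
      jacobiTrudi a lam τ.1.parts n := by
    ext i j
    have hτj := NatPartition.parts_le_of_mem_box τ.2 j
    rw [Matrix.submatrix_apply, hbot _ _ (Fin.le_coe_natAdd m i), Fin.val_natAdd,
      Nat.add_sub_cancel_left]
    refine congrArg a ?_
    simp only [NatPartition.rowStep]
    omega
  have hcol : A.submatrix (Fin.castAdd n) (NatPartition.colStep τ) =
      (jacobiTrudi b mu τ.1.conjugate.parts m).submatrix Fin.revPerm Fin.revPerm := by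
    ext i j
    rw [Matrix.submatrix_apply, htop _ _ i.is_lt]
    refine congrArg b ?_
    simp only [NatPartition.colStep, Fin.revPerm_apply, Fin.val_rev, Fin.val_castAdd]
    rw [Nat.sub_sub, Nat.add_comm 1]
    push_cast
    omega
  rw [hrow, hcol, Matrix.det_submatrix_equiv_self]
  ring

end JacobiTrudi

section SkewTerm

variable {m n N M : ℕ} {lam mu : ℕ → ℕ} {τ : NatPartition}

theorem rename_hInt_of_neg {α : Type*} (f : Fin N → α) : ∀ k < 0, (rename f ∘ hInt N) k = 0 :=
  fun k hk => by simp [hInt, hk.not_ge]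

theorem rename_hInt_zero {α : Type*} (f : Fin N → α) : (rename f ∘ hInt N) 0 = 1 := by
  simp [hInt]

theorem skewTerm_eq (m n N M : ℕ) (lam mu : ℕ → ℕ) (τ : NatPartition) :
    skewTerm m n N M lam mu τ = (-1) ^ τ.size *
      (jacobiTrudi (rename Sum.inl ∘ hInt N) lam τ.parts (n + τ.length)).det *
      (jacobiTrudi (rename Sum.inr ∘ hInt M) mu τ.conjugate.parts (m + τ.parts 0)).det := by
  rw [skewTerm, AlgHom.map_det, AlgHom.map_det]
  rfl

theorem skewTerm_eq_zero_of_notMem_box (hlam : ∀ j, n ≤ j → lam j = 0)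
    (hmu : ∀ j, m ≤ j → mu j = 0) (hτ : τ ∉ NatPartition.box m n) :
    skewTerm m n N M lam mu τ = 0 := by
  rw [skewTerm_eq]
  rcases not_and_or.1 hτ with hlen | hpart
  · have hpos : ∀ j ≤ n, 0 < τ.parts j := fun j hj =>
      (NatPartition.lt_length_iff.1 (not_le.1 hlen)).trans_le (τ.antitone hj)
    rw [det_jacobiTrudi_eq_zero (rename_hInt_of_neg _) hlam hpos (by omega), mul_zero, zero_mul]
  · have hpos : ∀ j ≤ m, 0 < τ.conjugate.parts j := fun j hj =>
      NatPartition.lt_conjugate_parts_iff.2 (hj.trans_lt (not_le.1 hpart))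
    rw [det_jacobiTrudi_eq_zero (rename_hInt_of_neg _) hmu hpos (by omega), mul_zero]

theorem skewTerm_eq_of_mem_box (hlam : ∀ j, n ≤ j → lam j = 0) (hmu : ∀ j, m ≤ j → mu j = 0)
    (hτ : τ ∈ NatPartition.box m n) :
    skewTerm m n N M lam mu τ = (-1) ^ τ.size *
      (jacobiTrudi (rename Sum.inl ∘ hInt N) lam τ.parts n).det *
      (jacobiTrudi (rename Sum.inr ∘ hInt M) mu τ.conjugate.parts m).det := by
  have hrow : ∀ j, n ≤ j → τ.parts j = 0 := fun _ => NatPartition.parts_eq_zero_of_mem_box hτ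
  have hcol : ∀ j, m ≤ j → τ.conjugate.parts j = 0 := fun _ =>
    NatPartition.parts_eq_zero_of_mem_box (NatPartition.conjugate_mem_box hτ)
  rw [skewTerm_eq,
    det_jacobiTrudi_add (rename_hInt_of_neg _) (rename_hInt_zero _) hlam hrow,
    det_jacobiTrudi_add (rename_hInt_of_neg _) (rename_hInt_zero _) hmu hcol]

end SkewTerm

theorem statement9_general (m n N M : ℕ) (lam mu : ℕ → ℕ)
    (hlam_len : ∀ j, n ≤ j → lam j = 0) (hmu_len : ∀ j, m ≤ j → mu j = 0)
    (Mmat : Matrix (Fin (m + n)) (Fin (m + n)) (MvPolynomial (Fin N ⊕ Fin M) ℤ))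
    (hMtop : ∀ (i j : Fin (m + n)), (i : ℕ) < m → Mmat i j =
      rename Sum.inr (hInt M ((mu (m - 1 - (i : ℕ)) : ℤ) + (i : ℕ) - (j : ℕ))))
    (hMbot : ∀ (i j : Fin (m + n)), m ≤ (i : ℕ) → Mmat i j =
      rename Sum.inl (hInt N ((lam ((i : ℕ) - m) : ℤ) - (i : ℕ) + (j : ℕ)))) :
    (Matrix.det Mmat =
        ∑ᶠ τ ∈ {τ : NatPartition | τ.length ≤ n ∧ τ.parts 0 ≤ m},
          skewTerm m n N M lam mu τ) ∧
    Matrix.det Mmat = ∑ᶠ τ : NatPartition, skewTerm m n N M lam mu τ := by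
  have hbox : Mmat.det = ∑ᶠ τ ∈ NatPartition.box m n, skewTerm m n N M lam mu τ :=
    calc Mmat.det = ∑ τ : NatPartition.box m n, skewTerm m n N M lam mu τ :=
          (det_eq_sum_box_jacobiTrudi _ _ lam mu Mmat hMtop hMbot).trans <|
            Finset.sum_congr rfl fun τ _ => (skewTerm_eq_of_mem_box hlam_len hmu_len τ.2).symm
      _ = ∑ᶠ τ ∈ NatPartition.box m n, skewTerm m n N M lam mu τ := by
          rw [← finsum_eq_sum_of_fintype, finsum_set_coe_eq_finsum_mem]
  have hsupport : Function.support (skewTerm m n N M lam mu) ⊆ NatPartition.box m n :=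
    Function.support_subset_iff'.2 fun τ => skewTerm_eq_zero_of_notMem_box hlam_len hmu_len
  exact ⟨hbox, by rw [hbox, finsum_mem_def, Set.indicator_eq_self.2 hsupport]⟩

/-- Let `λ = (λ₁ ≥ … ≥ λ_n ≥ 0)`, `μ = (μ₁ ≥ … ≥ μ_m ≥ 0)` be partitions
and `x = (x₁,…,x_N)`, `y = (y₁,…,y_M)` disjoint variable sets.  Let `Mmat` be the
`(m+n) × (m+n)` matrix with entries `h_{μ_{m+1-i} + i - j}(y)` in rows `1 ≤ i ≤ m` and
`h_{λ_{i-m} - (i-m) + (j-m)}(x)` in rows `m < i ≤ m+n`.  Then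
`det(Mmat) = Σ_τ (-1)^{|τ|} s_{λ/τ}(x) · s_{μ/τ'}(y)`, where the sum ranges over all
partitions `τ` with at most `n` parts each of size at most `m`; moreover the same
identity holds with the sum ranging over all partitions `τ` (the additional terms all
vanish, so the sum has finite support). -/
theorem statement9 (m n N M : ℕ) (lam mu : ℕ → ℕ)
    (hlam_anti : Antitone lam) (hlam_len : ∀ j, n ≤ j → lam j = 0)
    (hmu_anti : Antitone mu) (hmu_len : ∀ j, m ≤ j → mu j = 0)
    (Mmat : Matrix (Fin (m + n)) (Fin (m + n)) (MvPolynomial (Fin N ⊕ Fin M) ℤ))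
    (hMtop : ∀ (i j : Fin (m + n)), (i : ℕ) < m → Mmat i j =
      rename Sum.inr (hInt M ((mu (m - 1 - (i : ℕ)) : ℤ) + (i : ℕ) - (j : ℕ))))
    (hMbot : ∀ (i j : Fin (m + n)), m ≤ (i : ℕ) → Mmat i j =
      rename Sum.inl (hInt N ((lam ((i : ℕ) - m) : ℤ) - (i : ℕ) + (j : ℕ)))) :
    (Matrix.det Mmat =
        ∑ᶠ τ ∈ {τ : NatPartition | τ.length ≤ n ∧ τ.parts 0 ≤ m},
          skewTerm m n N M lam mu τ) ∧
    Matrix.det Mmat = ∑ᶠ τ : NatPartition, skewTerm m n N M lam mu τ :=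
  statement9_general m n N M lam mu hlam_len hmu_len Mmat hMtop hMbot
end
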